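/- arXiv:2107.04325 — 2 statements merged into one kernel-verified Lean document; each statement's English description precedes it below -/
import Mathlib

section
/- There exists a measurable map θ : {(t,s) : 0 ≤ t ≤ s ≤ T} × ℝ^N → ℝ^N such that for all 0 ≤ t ≤ s ≤ T and all z ∈ ℝ^N, θ_{t,s}(z) = z − ∫_t^s [A_u θ_{u,s}(z) + F(u, θ_{u,s}(z))] du; that is, there is a jointly measurable version of a backward Cauchy–Peano flow for the ODE ẏ_u = A_u y_u + F(u, y_u). -/
/-!
The right-hand side `b(u, x) = A_u x + F(u, x)` is jointly measurable, continuous in `x` and of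
linear growth (`ChainHyp.measurable_drift`, `ChainHyp.continuous_F`, `ChainHyp.exists_growth`): the
blockwise Hölder conditions add up to a modulus of continuity. Solutions of the ODE therefore exist
but need not be unique, and the point is to choose one measurably in the terminal data `(s, z)`.

With `p = (s, z)` as a parameter and `r = s - u` as time, the problem is
`v(r) = z + ∫_0^r g p q (v q) dq` on `[0, T]`. Tonelli's delayed equations, where `v q` is replaced
by `v (q - T/(k+1))`, have explicit solutions obtained by finitely many integrations
(`delayIter_succ_eq`), hence jointly measurable. For fixed `p` they are bounded and equi-Lipschitz
(`delayIter_bound`, `delayIter_lipschitz`), hence relatively compact in `C([0, T])`, and by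
dominated convergence each of their cluster points solves the equation.

It remains to choose a cluster point measurably in `p` (`exists_measurable_subseq_limit`). This
works for any pointwise relatively compact sequence in a complete separable metric space: at stage
`m` one takes the first ball of radius `2^{-m}`, centred in a fixed dense sequence, that contains
infinitely many of the terms retained so far, and retains only the terms in that ball. The index of
the ball is a measurable function of `p`, and the centres converge to a cluster point.
-/

open MeasureTheory Real Set

noncomputable section

/-- The product state space `ℝ^N = ℝ^{d 0} × ⋯ × ℝ^{d (n-1)}`,
the `i`-th block having dimension `d i`. -/
abbrev E (n : ℕ) (d : Fin n → ℕ) : Type := ∀ i : Fin n, Fin (d i) → ℝ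

/-- The action of the inverse intrinsic scale matrix `𝕋_h⁻¹ = h^{-1/α} 𝕄_h⁻¹`:
it rescales the `i`-th block (0-indexed) by `h^{-(1/α + i)}`. -/
def Tinv {n : ℕ} {d : Fin n → ℕ} (α h : ℝ) (x : E n d) : E n d :=
  fun i => (h ^ ((1 : ℝ) / α + ((i : ℕ) : ℝ)))⁻¹ • x i

/-- `det 𝕋_h = h^{∑ i d_i (1/α + i)}` (0-indexed blocks). -/
def detT (n : ℕ) (d : Fin n → ℕ) (α h : ℝ) : ℝ :=
  h ^ (∑ i : Fin n, (d i : ℝ) * ((1 : ℝ) / α + ((i : ℕ) : ℝ)))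

/-- A measurable Cauchy–Peano flow for `ẏ_u = A_u y_u + F(u, y_u)` on `[0,T]`:
`θ_{t,s}(z) = z - ∫_t^s (A_u θ_{u,s}(z) + F(u, θ_{u,s}(z))) du` (signed integral).
For `t ≤ s`, `θ_{t,s}(y)` is the backward flow with terminal value `y` at time `s`,
and `θ_{s,t}(x)` is the forward flow started from `x` at time `t`. -/
def IsFlow {n : ℕ} {d : Fin n → ℕ} (T : ℝ) (A : ℝ → E n d →L[ℝ] E n d)
    (F : ℝ → E n d → E n d) (θ : ℝ → ℝ → E n d → E n d) : Prop :=
  Measurable (fun p : ℝ × ℝ × E n d => θ p.1 p.2.1 p.2.2) ∧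
  ∀ t s : ℝ, t ∈ Icc (0 : ℝ) T → s ∈ Icc (0 : ℝ) T → ∀ z : E n d,
    θ t s z = z - ∫ u in t..s, (A u (θ u s z) + F u (θ u s z))

/-- The time-ordered resolvent of `A`, in applied form:
`R_{s,t} x = x + ∫_t^s A_u (R_{u,t} x) du`, i.e. `∂_s R_{s,t} = A_s R_{s,t}`, `R_{t,t} = Id`. -/
def IsResolvent {n : ℕ} {d : Fin n → ℕ} (T : ℝ) (A : ℝ → E n d →L[ℝ] E n d)
    (R : ℝ → ℝ → E n d →L[ℝ] E n d) : Prop :=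
  ∀ s t : ℝ, s ∈ Icc (0 : ℝ) T → t ∈ Icc (0 : ℝ) T → ∀ x : E n d,
    R s t x = x + ∫ u in t..s, A u (R u t x)

/-- The frozen shift `m̃^{τ,ξ}_{s,t}(x) = R_{s,t} x + ∫_t^s R_{s,u} F(u, θ_{u,τ}(ξ)) du`. -/
def shiftm {n : ℕ} {d : Fin n → ℕ} (F : ℝ → E n d → E n d)
    (θ : ℝ → ℝ → E n d → E n d) (R : ℝ → ℝ → E n d →L[ℝ] E n d)
    (τ : ℝ) (ξ : E n d) (s t : ℝ) (x : E n d) : E n d :=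
  R s t x + ∫ u in t..s, R s u (F u (θ u τ ξ))

/-- Family of smooth compactly supported probability-density mollifiers. -/
def IsMollifier {n : ℕ} {d : Fin n → ℕ} (ρ : Fin n → E n d → ℝ) : Prop :=
  ∀ i, ContDiff ℝ (⊤ : ℕ∞) (ρ i) ∧ HasCompactSupport (ρ i) ∧ (∀ ω, 0 ≤ ρ i ω) ∧
    (∫ ω : E n d, ρ i ω) = 1

/-- The multiscale mollification `F^δ` of the drift `F`:
`F_i^δ(t,z) = ∫ F(t, z - δ_{i·} ⋄ ω)_i ρ_i(ω) dω`, block `j` being mollified at scale `δ_{ij}`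
(equivalently, the anisotropic convolution of `F_i(t,·)` with the rescaled mollifier). -/
def molF {n : ℕ} {d : Fin n → ℕ} (ρ : Fin n → E n d → ℝ) (δ : Fin n → Fin n → ℝ)
    (F : ℝ → E n d → E n d) (t : ℝ) (z : E n d) : E n d :=
  fun i => ∫ ω : E n d, ρ i ω • F t (fun j => z j - δ i j • ω j) i

/-- The standing assumptions of the degenerate chain setup: dimensions, sub-criticality,
lower-triangular block structure of `A`, upper-diagonal dependence, boundedness and
anisotropic Hölder continuity of `F` (indices are 0-based: block `i` here is block `i+1`
of the paper). -/
structure ChainHyp (n : ℕ) [NeZero n] (d : Fin n → ℕ) (α T K : ℝ)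
    (A : ℝ → E n d →L[ℝ] E n d) (F : ℝ → E n d → E n d) (β : Fin n → ℝ) : Prop where
  hd : ∀ i, 1 ≤ d i
  hdmono : ∀ i j : Fin n, i ≤ j → d j ≤ d i
  hα₁ : 1 < α
  hα₂ : α < 2
  hT : 0 < T
  hK : 1 ≤ K
  hAmeas : ∀ x : E n d, Measurable fun t => A t x
  hAbdd : ∃ CA : ℝ, ∀ t : ℝ, ‖A t‖ ≤ CA
  hAblock : ∀ (t : ℝ) (i j : Fin n) (v : Fin (d j) → ℝ),
    (j : ℕ) + 1 < (i : ℕ) → A t (Pi.single j v) i = 0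
  hFmeas : Measurable fun p : ℝ × E n d => F p.1 p.2
  hFdep : ∀ (i : Fin n) (t : ℝ) (x x' : E n d), (∀ j, i ≤ j → x j = x' j) → F t x i = F t x' i
  hF0 : ∀ (t : ℝ) (i : Fin n), ‖F t 0 i‖ ≤ K
  hβ0 : 0 < β 0 ∧ β 0 ≤ 1
  hβ : ∀ j : Fin n, 1 ≤ (j : ℕ) →
    (1 + α * (((j : ℕ) : ℝ) - 1)) / (1 + α * ((j : ℕ) : ℝ)) < β j ∧ β j ≤ 1
  hHolder : ∃ CH : ℝ, 0 < CH ∧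
    (∀ (j : Fin n) (t : ℝ) (x x' : E n d), (∀ k, k ≠ j → x k = x' k) →
      ‖F t x 0 - F t x' 0‖ ≤ CH * ‖x j - x' j‖ ^ (β 0)) ∧
    ∀ (i j : Fin n), 1 ≤ (i : ℕ) → i ≤ j → ∀ (t : ℝ) (x x' : E n d),
      (∀ k, k ≠ j → x k = x' k) →
      ‖F t x i - F t x' i‖ ≤ CH * ‖x j - x' j‖ ^ (β j)

/-! ### Measurable choice of a cluster point -/

open Filter Topology in
/-- One refinement step: out of infinitely many indices `k` with `p ∈ B k` one keeps infinitely
many for which `x k p` lies in a single ball of radius `r`, whose centre is chosen measurably. -/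
lemma exists_measurable_refine {P X : Type*} [MeasurableSpace P] [MetricSpace X]
    [TopologicalSpace.SeparableSpace X] [Nonempty X] [MeasurableSpace X]
    {x : ℕ → P → X} (hx : ∀ k c, Measurable fun p => dist (x k p) c)
    (hS : ∀ p, ∃ S : Set X, IsCompact S ∧ ∀ k, x k p ∈ S)
    {B : ℕ → Set P} (hB : ∀ k, MeasurableSet (B k)) (hBf : ∀ p, ∃ᶠ k in atTop, p ∈ B k)
    {r : ℝ} (hr : 0 < r) :
    ∃ (B' : ℕ → Set P) (y : P → X), Measurable y ∧ (∀ k, MeasurableSet (B' k)) ∧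
      (∀ p, ∃ᶠ k in atTop, p ∈ B' k) ∧ (∀ k, B' k ⊆ B k) ∧
      ∀ k, ∀ p ∈ B' k, dist (x k p) (y p) < r := by
  classical
  let c := TopologicalSpace.denseSeq X
  have hball : ∀ k i, MeasurableSet {p | p ∈ B k ∧ dist (x k p) (c i) < r} := fun k i =>
    (hB k).inter (measurableSet_lt (hx k (c i)) measurable_const)
  have hex : ∀ p, ∃ i, ∃ᶠ k in atTop, p ∈ B k ∧ dist (x k p) (c i) < r := by
    intro p
    obtain ⟨S, hSc, hxS⟩ := hS p
    obtain ⟨φ, hφ, hφB⟩ := extraction_of_frequently_atTop (hBf p)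
    obtain ⟨a, -, ψ, hψ, hlim⟩ := hSc.tendsto_subseq (fun k => hxS (φ k))
    obtain ⟨i, hi⟩ : ∃ i, dist a (c i) < r := by
      obtain ⟨i, hi⟩ := (TopologicalSpace.denseRange_denseSeq X).exists_mem_open
        (Metric.isOpen_ball (x := a) (ε := r)) ⟨a, by simpa using hr⟩
      exact ⟨i, by rw [dist_comm]; exact hi⟩
    refine ⟨i, ?_⟩
    have hev : ∀ᶠ k in atTop, dist (x (φ (ψ k)) p) (c i) < r :=
      (hlim.dist tendsto_const_nhds).eventually (gt_mem_nhds hi)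
    exact (hφ.comp hψ).tendsto_atTop.frequently
      (hev.mono fun k hk => ⟨hφB (ψ k), hk⟩).frequently
  have hmeas : ∀ i, MeasurableSet {p | ∃ᶠ k in atTop, p ∈ B k ∧ dist (x k p) (c i) < r} := by
    intro i
    simp only [frequently_atTop, ofPred_forall, ofPred_exists]
    refine MeasurableSet.iInter fun N => MeasurableSet.iUnion fun k => ?_
    exact (MeasurableSet.const _).inter (hball k i)
  have hfind : Measurable fun p => Nat.find (hex p) := measurable_find hex hmeas
  refine ⟨fun k => {p | p ∈ B k ∧ dist (x k p) (c (Nat.find (hex p))) < r},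
    fun p => c (Nat.find (hex p)), (measurable_from_nat (f := c)).comp hfind, fun k => ?_,
    fun p => Nat.find_spec (hex p), fun k p hp => hp.1, fun k p hp => hp.2⟩
  have : {p | p ∈ B k ∧ dist (x k p) (c (Nat.find (hex p))) < r} =
      ⋃ i, {p | Nat.find (hex p) = i} ∩ {p | p ∈ B k ∧ dist (x k p) (c i) < r} := by
    ext p; simp
  change MeasurableSet {p | p ∈ B k ∧ dist (x k p) (c (Nat.find (hex p))) < r}
  rw [this]
  exact MeasurableSet.iUnion fun i => (hfind (measurableSet_singleton i)).inter (hball k i)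

open Filter Topology in
/-- A pointwise relatively compact sequence of measurable maps into a complete separable metric
space admits a measurable selection of cluster points. Measurability of the sequence is only
required through its distances to fixed points. -/
theorem exists_measurable_subseq_limit {P X : Type*} [MeasurableSpace P] [MetricSpace X]
    [TopologicalSpace.SeparableSpace X] [CompleteSpace X] [Nonempty X] [MeasurableSpace X]
    [BorelSpace X] {x : ℕ → P → X} (hx : ∀ k c, Measurable fun p => dist (x k p) c)
    (hS : ∀ p, ∃ S : Set X, IsCompact S ∧ ∀ k, x k p ∈ S) :
    ∃ L : P → X, Measurable L ∧ ∀ p, ∃ φ : ℕ → ℕ, StrictMono φ ∧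
      Tendsto (fun k => x (φ k) p) atTop (𝓝 (L p)) := by
  let G := {B : ℕ → Set P // (∀ k, MeasurableSet (B k)) ∧ ∀ p, ∃ᶠ k in atTop, p ∈ B k}
  have step : ∀ (m : ℕ) (B : G), ∃ (B' : G) (y : P → X), Measurable y ∧
      (∀ k, B'.1 k ⊆ B.1 k) ∧ ∀ k, ∀ p ∈ B'.1 k, dist (x k p) (y p) < (1 / 2 : ℝ) ^ m := by
    intro m B
    obtain ⟨B', y, hy, h1, h2, h3, h4⟩ := exists_measurable_refine hx hS B.2.1 B.2.2
      (r := (1 / 2 : ℝ) ^ m) (by positivity)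
    exact ⟨⟨B', h1, h2⟩, y, hy, h3, h4⟩
  choose next y hy hsub hdist using step
  let B0 : G := ⟨fun _ => univ, fun _ => MeasurableSet.univ, fun p => by
    simpa using Filter.atTop_neBot (α := ℕ)⟩
  let B : ℕ → G := fun m => Nat.rec B0 (fun m b => next m b) m
  let Y : ℕ → P → X := fun m => y m (B m)
  have hY : ∀ m k p, p ∈ (B (m + 1)).1 k → dist (x k p) (Y m p) < (1 / 2 : ℝ) ^ m :=
    fun m k p hp => hdist m (B m) k p hp
  have hstep : ∀ p m, dist (Y m p) (Y (m + 1) p) ≤ 2 * (1 / 2 : ℝ) ^ m := by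
    intro p m
    obtain ⟨k, hk⟩ := ((B (m + 2)).2.2 p).exists
    have h1 := hY (m + 1) k p hk
    have h2 := hY m k p (hsub _ _ k hk)
    have h3 := dist_triangle_left (Y m p) (Y (m + 1) p) (x k p)
    have h4 : (1 / 2 : ℝ) ^ (m + 1) ≤ (1 / 2 : ℝ) ^ m :=
      pow_le_pow_of_le_one (by norm_num) (by norm_num) (by omega)
    linarith
  have hlim : ∀ p, ∃ l, Tendsto (fun m => Y m p) atTop (𝓝 l) := fun p =>
    cauchySeq_tendsto_of_complete
      (cauchySeq_of_le_geometric (1 / 2) 2 (by norm_num) (hstep p))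
  choose L hL using hlim
  refine ⟨L, measurable_of_tendsto_metrizable (fun m => hy m (B m)) (tendsto_pi_nhds.2 hL),
    fun p => ?_⟩
  obtain ⟨φ, hφ, hφB⟩ := extraction_forall_of_frequently fun m => (B (m + 1)).2.2 p
  refine ⟨φ, hφ, (tendsto_iff_of_dist ?_).1 (hL p)⟩
  refine squeeze_zero (fun _ => dist_nonneg) (fun m => ?_)
    (tendsto_pow_atTop_nhds_zero_of_lt_one (r := (1 / 2 : ℝ)) (by norm_num) (by norm_num))
  rw [dist_comm]
  exact (hY m _ p (hφB m)).le

/-- Distances of a curve-valued map to a fixed curve are measurable once all its evaluations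
are: the supremum may be taken over a countable dense set of times. -/
lemma measurable_dist_continuousMap {P I V : Type*} [MeasurableSpace P] [TopologicalSpace I]
    [CompactSpace I] [TopologicalSpace.SeparableSpace I] [MetricSpace V]
    [SecondCountableTopology V] [MeasurableSpace V] [BorelSpace V]
    {f : P → C(I, V)} (hf : ∀ r, Measurable fun p => f p r) (c : C(I, V)) :
    Measurable fun p => dist (f p) c := by
  obtain ⟨D, hDc, hD⟩ := TopologicalSpace.exists_countable_dense I
  refine measurable_of_Iic fun a => ?_
  rcases lt_or_ge a 0 with ha | ha
  · have : (fun p => dist (f p) c) ⁻¹' Iic a = ∅ := by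
      ext p; simpa using ha.trans_le dist_nonneg
    rw [this]; exact MeasurableSet.empty
  · have : (fun p => dist (f p) c) ⁻¹' Iic a = ⋂ r ∈ D, {p | dist (f p r) (c r) ≤ a} := by
      ext p
      simp only [mem_preimage, mem_Iic, ContinuousMap.dist_le ha, mem_iInter, mem_ofPred_eq]
      refine ⟨fun h r _ => h r, fun h => ?_⟩
      have hcl : IsClosed {r | dist (f p r) (c r) ≤ a} :=
        isClosed_le ((f p).continuous.dist c.continuous) continuous_const
      exact fun r => hcl.closure_subset_iff.2 h (hD r)
    rw [this]
    exact MeasurableSet.biInter hDc fun r _ =>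
      measurableSet_le ((hf r).dist measurable_const) measurable_const

/-- Arzelà–Ascoli for the curves with prescribed bound and Lipschitz constant. -/
lemma isCompact_lipschitz_curves {I V : Type*} [PseudoMetricSpace I] [CompactSpace I]
    [NormedAddCommGroup V] [ProperSpace V] (M : ℝ) (l : NNReal) :
    IsCompact {f : C(I, V) | (∀ r, ‖f r‖ ≤ M) ∧ LipschitzWith l f} := by
  refine ArzelaAscoli.isCompact_of_equicontinuous _ ?_ ?_
  · have : ContinuousMap.toFun '' {f : C(I, V) | (∀ r, ‖f r‖ ≤ M) ∧ LipschitzWith l f} =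
        (univ.pi fun _ => Metric.closedBall 0 M) ∩ {f | LipschitzWith l f} := by
      ext f
      constructor
      · rintro ⟨g, ⟨h1, h2⟩, rfl⟩
        exact ⟨fun r _ => by simpa using h1 r, h2⟩
      · rintro ⟨h1, h2⟩
        exact ⟨⟨f, LipschitzWith.continuous h2⟩,
          ⟨fun r => by simpa using h1 r (mem_univ r), h2⟩, rfl⟩
    rw [this]
    refine (isCompact_univ_pi fun _ => isCompact_closedBall 0 M).inter_right ?_
    exact isClosed_setOfPred_lipschitzWith (α := I) (β := V) l
  · exact (LipschitzWith.uniformEquicontinuous _ l fun f => f.2.2).equicontinuous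

/-! ### Delayed approximations -/

section
variable {P V : Type*} [NormedAddCommGroup V] [NormedSpace ℝ V]

/-- The `m`-th Picard iterate, started at the constant curve `z p`, of the delayed equation
`v(r) = z p + ∫_0^r g p q (v (q - h)) dq`; for `r ≤ 0` the value is `z p`. -/
def delayIter (g : P → ℝ → V → V) (z : P → V) (h : ℝ) : ℕ → P → ℝ → V
  | 0 => fun p _ => z p
  | m + 1 => fun p r => z p + ∫ q in Ioc 0 r, g p q (delayIter g z h m p (q - h))

variable {g : P → ℝ → V → V} {z : P → V} {h C : ℝ}

lemma delayIter_measurable [MeasurableSpace P] [MeasurableSpace V] [BorelSpace V]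
    [SecondCountableTopology V] (hg : Measurable fun a : P × ℝ × V => g a.1 a.2.1 a.2.2)
    (hz : Measurable z) (m : ℕ) :
    Measurable fun a : P × ℝ => delayIter g z h m a.1 a.2 := by
  induction m with
  | zero => exact hz.comp measurable_fst
  | succ m ih =>
    have hpath : Measurable fun b : (P × ℝ) × ℝ =>
        g b.1.1 b.2 (delayIter g z h m b.1.1 (b.2 - h)) :=
      hg.comp ((measurable_fst.comp measurable_fst).prodMk (measurable_snd.prodMk
        (ih.comp ((measurable_fst.comp measurable_fst).prodMk (measurable_snd.sub_const h)))))
    have hind : Measurable (({b : (P × ℝ) × ℝ | b.2 ∈ Ioc 0 b.1.2}).indicator fun b =>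
        g b.1.1 b.2 (delayIter g z h m b.1.1 (b.2 - h))) :=
      hpath.indicator ((measurableSet_lt measurable_const measurable_snd).inter
        (measurableSet_le measurable_snd (measurable_snd.comp measurable_fst)))
    have hint := (hind.stronglyMeasurable.integral_prod_right' (ν := volume)).measurable
    refine (hz.comp measurable_fst).add ?_
    convert hint using 2 with a
    rw [← integral_indicator measurableSet_Ioc]
    rfl

/-- The delayed iterates obey the Grönwall bound of the undelayed equation, since the delay only
looks at earlier times. -/
lemma delayIter_bound (hC : 0 ≤ C) (hh : 0 ≤ h) (hgC : ∀ p q x, ‖g p q x‖ ≤ C * (1 + ‖x‖))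
    (m : ℕ) (p : P) (r : ℝ) :
    1 + ‖delayIter g z h m p r‖ ≤ (1 + ‖z p‖) * exp (C * max r 0) := by
  have hone : ∀ r : ℝ, 1 ≤ exp (C * max r 0) := fun r =>
    one_le_exp (mul_nonneg hC (le_max_right _ _))
  have hz0 : 0 ≤ 1 + ‖z p‖ := by positivity
  induction m generalizing r with
  | zero => exact le_mul_of_one_le_right hz0 (hone r)
  | succ m ih =>
    rcases le_total r 0 with hr | hr
    · simpa [delayIter, Ioc_eq_empty_of_le hr] using le_mul_of_one_le_right hz0 (hone r)
    · have hbound : ∀ q ∈ Ioc (0 : ℝ) r, ‖g p q (delayIter g z h m p (q - h))‖ ≤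
          (1 + ‖z p‖) * (C * exp (C * q)) := by
        intro q hq
        calc _ ≤ C * (1 + ‖delayIter g z h m p (q - h)‖) := hgC _ _ _
          _ ≤ C * ((1 + ‖z p‖) * exp (C * max (q - h) 0)) := by gcongr; exact ih _
          _ ≤ C * ((1 + ‖z p‖) * exp (C * q)) := by
            gcongr; exact max_le (by linarith) hq.1.le
          _ = _ := by ring
      have hder : ∀ q ∈ uIcc 0 r, HasDerivAt (fun q => exp (C * q)) (C * exp (C * q)) q := by
        intro q _
        have := ((hasDerivAt_id q).const_mul C).exp
        simpa [mul_comm] using this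
      have hftc := intervalIntegral.integral_eq_sub_of_hasDerivAt hder
        (Continuous.intervalIntegrable (by fun_prop) _ _)
      have hint : ‖∫ q in Ioc 0 r, g p q (delayIter g z h m p (q - h))‖ ≤
          (1 + ‖z p‖) * (exp (C * r) - 1) := by
        calc _ ≤ ∫ q in Ioc 0 r, (1 + ‖z p‖) * (C * exp (C * q)) := by
              refine norm_integral_le_of_norm_le ?_
                ((ae_restrict_mem measurableSet_Ioc).mono hbound)
              exact (Continuous.integrableOn_Icc (by fun_prop)).mono_set Ioc_subset_Icc_self
          _ = _ := by
              rw [← intervalIntegral.integral_of_le hr, intervalIntegral.integral_const_mul, hftc]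
              simp
      have := norm_add_le (z p) (∫ q in Ioc 0 r, g p q (delayIter g z h m p (q - h)))
      rw [max_eq_left hr]
      simp only [delayIter]
      nlinarith

lemma delayIter_path_bound {T : ℝ} (hC : 0 ≤ C) (hh : 0 ≤ h)
    (hgC : ∀ p q x, ‖g p q x‖ ≤ C * (1 + ‖x‖)) (hT : 0 ≤ T) (m : ℕ) (p : P) {r : ℝ}
    (hr : r ≤ T) : 1 + ‖delayIter g z h m p r‖ ≤ (1 + ‖z p‖) * exp (C * T) := by
  refine (delayIter_bound hC hh hgC m p r).trans ?_
  gcongr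
  exact max_le hr hT

lemma delayIter_drift_bound {T : ℝ} (hC : 0 ≤ C) (hh : 0 ≤ h)
    (hgC : ∀ p q x, ‖g p q x‖ ≤ C * (1 + ‖x‖)) (hT : 0 ≤ T) (m : ℕ) (p : P) {r : ℝ}
    (hr : r ≤ T) (q : ℝ) :
    ‖g p q (delayIter g z h m p r)‖ ≤ C * ((1 + ‖z p‖) * exp (C * T)) :=
  (hgC _ _ _).trans (mul_le_mul_of_nonneg_left (delayIter_path_bound hC hh hgC hT m p hr) hC)

lemma delayIter_lipschitz [MeasurableSpace P] [MeasurableSpace V] [BorelSpace V]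
    [SecondCountableTopology V] {T : ℝ} (hg : Measurable fun a : P × ℝ × V => g a.1 a.2.1 a.2.2)
    (hz : Measurable z) (hC : 0 ≤ C) (hh : 0 ≤ h)
    (hgC : ∀ p q x, ‖g p q x‖ ≤ C * (1 + ‖x‖)) (hT : 0 ≤ T) (m : ℕ) (p : P) :
    LipschitzOnWith (C * ((1 + ‖z p‖) * exp (C * T))).toNNReal (delayIter g z h m p) (Iic T) := by
  have hL : 0 ≤ C * ((1 + ‖z p‖) * exp (C * T)) := by positivity
  cases m with
  | zero => exact LipschitzOnWith.of_dist_le_mul fun _ _ _ _ => by simp [delayIter]; positivity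
  | succ m =>
    have hmeas : Measurable fun q => g p q (delayIter g z h m p (q - h)) :=
      hg.comp (measurable_const.prodMk (measurable_id.prodMk
        ((delayIter_measurable hg hz m).comp
          (measurable_const.prodMk (measurable_id.sub_const h)))))
    have key : ∀ r s, r ≤ s → s ≤ T → dist (delayIter g z h (m + 1) p s)
        (delayIter g z h (m + 1) p r) ≤ C * ((1 + ‖z p‖) * exp (C * T)) * (s - r) := by
      intro r s hrs hsT
      have hb : ∀ q ∈ Ioc 0 s, ‖g p q (delayIter g z h m p (q - h))‖ ≤
          C * ((1 + ‖z p‖) * exp (C * T)) := fun q hq =>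
        delayIter_drift_bound hC hh hgC hT m p (by linarith [hq.2]) q
      have hi : IntegrableOn (fun q => g p q (delayIter g z h m p (q - h))) (Ioc 0 s) :=
        Measure.integrableOn_of_bounded (by simp) hmeas.aestronglyMeasurable
          ((ae_restrict_mem measurableSet_Ioc).mono hb)
      have hsub : Ioc 0 r ⊆ Ioc 0 s := Ioc_subset_Ioc_right hrs
      simp only [delayIter]
      rw [dist_add_left, dist_eq_norm, ← setIntegral_sdiff measurableSet_Ioc hi hsub]
      have hdiff : Ioc 0 s \ Ioc 0 r ⊆ Ioc r s := by
        rintro q ⟨hq1, hq2⟩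
        exact ⟨not_le.1 fun hqr => hq2 ⟨hq1.1, hqr⟩, hq1.2⟩
      have hvol : volume (Ioc 0 s \ Ioc 0 r) ≤ volume (Ioc r s) := measure_mono hdiff
      refine (norm_setIntegral_le_of_norm_le_const (hvol.trans_lt (by simp))
        fun q hq => hb q hq.1).trans ?_
      gcongr
      refine (ENNReal.toReal_mono (by simp) hvol).trans ?_
      simp [hrs]
    refine LipschitzOnWith.of_dist_le_mul fun r hr s hs => ?_
    rw [Real.coe_toNNReal _ hL]
    rcases le_total r s with h1 | h1
    · rw [dist_comm, dist_comm r s, Real.dist_eq, abs_of_nonneg (sub_nonneg.2 h1)]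
      exact key r s h1 hs
    · rw [Real.dist_eq, abs_of_nonneg (sub_nonneg.2 h1)]
      exact key s r h1 hr

/-- Each iteration settles one further time step of length `h`. -/
lemma delayIter_succ_eq (m : ℕ) (p : P) {r : ℝ} (hr : r ≤ m * h) :
    delayIter g z h (m + 1) p r = delayIter g z h m p r := by
  induction m generalizing r with
  | zero =>
    have hr0 : r ≤ 0 := by simpa using hr
    simp [delayIter, Ioc_eq_empty_of_le hr0]
  | succ m ih =>
    have hI : ∫ q in Ioc 0 r, g p q (delayIter g z h (m + 1) p (q - h)) =
        ∫ q in Ioc 0 r, g p q (delayIter g z h m p (q - h)) := by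
      refine setIntegral_congr_fun measurableSet_Ioc fun q hq => ?_
      push_cast at hr
      rw [ih (by linarith [hq.2])]
    exact congrArg (z p + ·) hI

open Filter Topology in
/-- Carathéodory–Peano existence with a parameter: solutions of `v' = g p r v`, `v 0 = z p` on
`[0, T]` can be chosen jointly measurable in the parameter and the time. -/
theorem exists_measurable_solution [MeasurableSpace P] [ProperSpace V] [CompleteSpace V]
    [SecondCountableTopology V] [MeasurableSpace V] [BorelSpace V] {T : ℝ} (hT : 0 < T)
    (hg : Measurable fun a : P × ℝ × V => g a.1 a.2.1 a.2.2) (hz : Measurable z) (hC : 0 ≤ C)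
    (hgC : ∀ p q x, ‖g p q x‖ ≤ C * (1 + ‖x‖)) (hgc : ∀ p q, Continuous (g p q)) :
    ∃ v : P → ℝ → V, Measurable (fun a : P × ℝ => v a.1 a.2) ∧
      ∀ p, ∀ r ∈ Icc 0 T, v p r = z p + ∫ q in Ioc 0 r, g p q (v p q) := by
  let δ : ℕ → ℝ := fun k => T / (k + 1)
  have hδ : ∀ k, 0 ≤ δ k := fun k => by positivity
  have hδ0 : Tendsto δ atTop (𝓝 0) := by
    simpa [δ, div_eq_mul_inv] using (tendsto_one_div_add_atTop_nhds_zero_nat (𝕜 := ℝ)).const_mul T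
  let w : ℕ → P → ℝ → V := fun k => delayIter g z (δ k) (k + 1)
  let M : P → ℝ := fun p => (1 + ‖z p‖) * exp (C * T)
  have hwM : ∀ k p r, r ≤ T → ‖w k p r‖ ≤ M p := fun k p r hr => by
    have := delayIter_path_bound (z := z) hC (hδ k) hgC hT.le (k + 1) p hr
    simp only [w, M]; linarith
  have hwl : ∀ k p, LipschitzOnWith (C * M p).toNNReal (w k p) (Iic T) := fun k p =>
    delayIter_lipschitz hg hz hC (hδ k) hgC hT.le (k + 1) p
  have hweq : ∀ k p r, r ≤ T →
      w k p r = z p + ∫ q in Ioc 0 r, g p q (w k p (q - δ k)) := by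
    intro k p r hr
    refine (delayIter_succ_eq (g := g) (z := z) (h := δ k) (k + 1) p ?_).symm
    have : ((k + 1 : ℕ) : ℝ) * δ k = T := by simp only [δ]; push_cast; field_simp
    rwa [this]
  have hwm : ∀ k, Measurable fun a : P × ℝ => w k a.1 a.2 := fun k =>
    delayIter_measurable hg hz (k + 1)
  have hlip : ∀ k p, LipschitzWith (C * M p).toNNReal fun r : Icc (0 : ℝ) T => w k p r :=
    fun k p => LipschitzWith.of_dist_le_mul fun r s =>
      (hwl k p).dist_le_mul r.1 r.2.2 s.1 s.2.2
  let x : ℕ → P → C(Icc (0 : ℝ) T, V) := fun k p => ⟨fun r => w k p r, (hlip k p).continuous⟩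
  let _ : MeasurableSpace C(Icc (0 : ℝ) T, V) := borel _
  have : BorelSpace C(Icc (0 : ℝ) T, V) := ⟨rfl⟩
  obtain ⟨L, hLm, hL⟩ := exists_measurable_subseq_limit (x := x)
    (fun k c => measurable_dist_continuousMap
      (fun r => (hwm k).comp (measurable_id.prodMk measurable_const)) c)
    (fun p => ⟨_, isCompact_lipschitz_curves (M p) (C * M p).toNNReal,
      fun k => ⟨fun r => hwM k p r r.2.2, hlip k p⟩⟩)
  let v : P → ℝ → V := fun p r => L p (projIcc 0 T hT.le r)
  have hvm : Measurable fun a : P × ℝ => v a.1 a.2 := by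
    have hev : Measurable fun a : C(Icc (0 : ℝ) T, V) × Icc (0 : ℝ) T => a.1 a.2 :=
      (continuous_fst.eval continuous_snd).measurable
    exact hev.comp ((hLm.comp measurable_fst).prodMk
      ((continuous_projIcc (h := hT.le)).measurable.comp measurable_snd))
  refine ⟨v, hvm, fun p r hr => ?_⟩
  obtain ⟨φ, hφ, hφL⟩ := hL p
  have hpt : ∀ q ∈ Icc 0 T, Tendsto (fun k => w (φ k) p q) atTop (𝓝 (v p q)) := by
    intro q hq
    simp only [v, projIcc_of_mem hT.le hq]
    exact ((continuous_eval_const (F := C(Icc (0 : ℝ) T, V)) (⟨q, hq⟩ : Icc (0 : ℝ) T)).tendsto (L p)).comp hφL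
  -- The delay is harmless in the limit because the curves are equi-Lipschitz.
  have hptd : ∀ q ∈ Icc 0 T, Tendsto (fun k => w (φ k) p (q - δ (φ k))) atTop (𝓝 (v p q)) := by
    intro q hq
    refine (tendsto_iff_of_dist ?_).1 (hpt q hq)
    have h0 : Tendsto (fun k => ((C * M p).toNNReal : ℝ) * δ (φ k)) atTop (𝓝 0) := by
      simpa using (hδ0.comp hφ.tendsto_atTop).const_mul ((C * M p).toNNReal : ℝ)
    refine squeeze_zero (fun _ => dist_nonneg) (fun k => ?_) h0
    refine ((hwl (φ k) p).dist_le_mul q hq.2 (q - δ (φ k))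
      (by simp only [mem_Iic]; linarith [hq.2, hδ (φ k)])).trans (le_of_eq ?_)
    rw [Real.dist_eq, sub_sub_cancel, abs_of_nonneg (hδ _)]
  have hint : Tendsto (fun k => ∫ q in Ioc 0 r, g p q (w (φ k) p (q - δ (φ k)))) atTop
      (𝓝 (∫ q in Ioc 0 r, g p q (v p q))) := by
    refine tendsto_integral_of_dominated_convergence (fun _ => C * M p) (fun k => ?_)
      (integrable_const _) (fun k => ?_) ?_
    · exact (hg.comp (measurable_const.prodMk (measurable_id.prodMk ((hwm (φ k)).comp
        (measurable_const.prodMk (measurable_id.sub_const _)))))).aestronglyMeasurable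
    · refine (ae_restrict_mem measurableSet_Ioc).mono fun q hq => ?_
      exact delayIter_drift_bound hC (hδ _) hgC hT.le _ p
        (by linarith [hq.2, hr.2, hδ (φ k)]) q
    · refine (ae_restrict_mem measurableSet_Ioc).mono fun q hq => ?_
      exact ((hgc p q).tendsto _).comp (hptd q ⟨hq.1.le, hq.2.trans hr.2⟩)
  refine tendsto_nhds_unique (hpt r hr) ?_
  simp_rw [hweq _ p r hr.2]
  exact hint.const_add _

end

/-! ### The drift of the chain -/

section
variable {n : ℕ} [NeZero n] {d : Fin n → ℕ} {α T K : ℝ} {A : ℝ → E n d →L[ℝ] E n d}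
  {F : ℝ → E n d → E n d} {β : Fin n → ℝ}

/-- Changing the blocks one after the other turns the blockwise Hölder conditions into a joint
modulus of continuity, uniform in time. Blocks on which `F_i` does not depend contribute nothing,
so the exponent attached to them is irrelevant. -/
lemma ChainHyp.exists_modulus (hc : ChainHyp n d α T K A F β) :
    ∃ (CH : ℝ) (γ : Fin n → Fin n → ℝ), 0 < CH ∧ (∀ i j, 0 < γ i j ∧ γ i j ≤ 1) ∧
      ∀ t x x' i, ‖F t x i - F t x' i‖ ≤ CH * ∑ j, ‖x j - x' j‖ ^ γ i j := by
  classical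
  obtain ⟨CH, hCH, h0, h1⟩ := hc.hHolder
  let γ : Fin n → Fin n → ℝ := fun i j => if i = 0 ∨ j = 0 then β 0 else β j
  have hpos : ∀ j : Fin n, j ≠ 0 → 1 ≤ (j : ℕ) := fun j hj =>
    Nat.one_le_iff_ne_zero.2 fun h => hj (Fin.ext (by simpa using h))
  refine ⟨CH, γ, hCH, fun i j => ?_, fun t x x' i => ?_⟩
  · by_cases hij : i = 0 ∨ j = 0
    · simpa [γ, hij] using hc.hβ0
    · have hj := hpos j fun h => hij (Or.inr h)
      have := hc.hβ j hj
      have hj' : (1 : ℝ) ≤ ((j : ℕ) : ℝ) := by exact_mod_cast hj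
      have hα := hc.hα₁
      have hlow : 0 ≤ (1 + α * (((j : ℕ) : ℝ) - 1)) / (1 + α * ((j : ℕ) : ℝ)) :=
        div_nonneg (by nlinarith) (by nlinarith)
      simp only [γ, hij, if_false]
      exact ⟨hlow.trans_lt this.1, this.2⟩
  have hone : ∀ (j : Fin n) (y y' : E n d), (∀ k, k ≠ j → y k = y' k) →
      ‖F t y i - F t y' i‖ ≤ CH * ‖y j - y' j‖ ^ γ i j := by
    intro j y y' hy
    by_cases hi : i = 0
    · subst hi
      simpa [γ] using h0 j t y y' hy
    · by_cases hij : i ≤ j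
      · have hj : j ≠ 0 := fun h => hi (le_antisymm (h ▸ hij) (Fin.zero_le i))
        simpa [γ, hi, hj] using h1 i j (hpos i hi) hij t y y' hy
      · rw [hc.hFdep i t y y' fun k hk => hy k fun h => hij (h ▸ hk), sub_self, norm_zero]
        positivity
  have hS : ∀ S : Finset (Fin n), ‖F t x i - F t (S.piecewise x' x) i‖ ≤
      CH * ∑ j ∈ S, ‖x j - x' j‖ ^ γ i j := by
    intro S
    induction S using Finset.induction_on with
    | empty => simp
    | insert j S hj ih =>
      have hstep := hone j (S.piecewise x' x) ((insert j S).piecewise x' x) fun k hk => by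
        simp [Finset.piecewise, hk]
      have hl : S.piecewise x' x j = x j := by simp [hj]
      have hr : (insert j S).piecewise x' x j = x' j := by simp
      rw [hl, hr] at hstep
      rw [Finset.sum_insert hj, mul_add]
      have := norm_sub_le_norm_sub_add_norm_sub (F t x i) (F t (S.piecewise x' x) i)
        (F t ((insert j S).piecewise x' x) i)
      linarith
  simpa using hS Finset.univ

lemma ChainHyp.continuous_F (hc : ChainHyp n d α T K A F β) (t : ℝ) : Continuous (F t) := by
  obtain ⟨CH, γ, -, hγ, hF⟩ := hc.exists_modulus
  refine continuous_pi fun i => continuous_iff_continuousAt.2 fun x => ?_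
  refine tendsto_iff_norm_sub_tendsto_zero.2 (squeeze_zero (fun _ => norm_nonneg _)
    (fun y => hF t y x i) ?_)
  have hcont : Continuous fun y : E n d => CH * ∑ j, ‖y j - x j‖ ^ γ i j :=
    continuous_const.mul (continuous_finsetSum _ fun j _ =>
      (((continuous_apply j).sub continuous_const).norm).rpow_const fun _ => Or.inr (hγ i j).1.le)
  have := hcont.tendsto x
  simpa [Real.zero_rpow (hγ i _).1.ne'] using this

lemma ChainHyp.exists_growth (hc : ChainHyp n d α T K A F β) :
    ∃ C : ℝ, 0 ≤ C ∧ ∀ t x, ‖A t x + F t x‖ ≤ C * (1 + ‖x‖) := by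
  obtain ⟨CH, γ, hCH, hγ, hF⟩ := hc.exists_modulus
  obtain ⟨CA, hCA⟩ := hc.hAbdd
  have hCA0 : 0 ≤ CA := (norm_nonneg _).trans (hCA 0)
  have hK : 0 ≤ K := zero_le_one.trans hc.hK
  have hFx : ∀ t x, ‖F t x‖ ≤ K + CH * (n * (1 + ‖x‖)) := by
    intro t x
    refine (pi_norm_le_iff_of_nonneg (by positivity)).2 fun i => ?_
    have hsum : ∑ j, ‖x j - (0 : E n d) j‖ ^ γ i j ≤ n * (1 + ‖x‖) := by
      have : ∀ j ∈ (Finset.univ : Finset (Fin n)),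
          ‖x j - (0 : E n d) j‖ ^ γ i j ≤ 1 + ‖x‖ := by
        intro j _
        calc ‖x j - (0 : E n d) j‖ ^ γ i j ≤ (1 + ‖x‖) ^ γ i j := by
              refine rpow_le_rpow (norm_nonneg _) ?_ (hγ i j).1.le
              have := norm_le_pi_norm x j
              simp only [Pi.zero_apply, sub_zero]
              linarith
          _ ≤ (1 + ‖x‖) ^ (1 : ℝ) :=
              rpow_le_rpow_of_exponent_le (by linarith [norm_nonneg x]) (hγ i j).2
          _ = 1 + ‖x‖ := rpow_one _
      simpa [mul_add] using Finset.sum_le_card_nsmul _ _ _ this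
    have h1 := norm_le_norm_add_norm_sub' (F t x i) (F t 0 i)
    have h2 := (hF t x 0 i).trans (mul_le_mul_of_nonneg_left hsum hCH.le)
    have h3 := hc.hF0 t i
    linarith
  refine ⟨CA + K + CH * n, by positivity, fun t x => ?_⟩
  have h1 : ‖A t x‖ ≤ CA * ‖x‖ := (A t).le_of_opNorm_le (hCA t) x
  have h2 := hFx t x
  have h3 := norm_add_le (A t x) (F t x)
  nlinarith [norm_nonneg x, mul_nonneg hK (norm_nonneg x)]

lemma ChainHyp.measurable_drift (hc : ChainHyp n d α T K A F β) :
    Measurable fun p : ℝ × E n d => A p.1 p.2 + F p.1 p.2 := by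
  have h : Measurable (Function.uncurry fun (x : E n d) (t : ℝ) => A t x) :=
    measurable_uncurry_of_continuous_of_measurable (fun t => (A t).continuous) hc.hAmeas
  exact (h.comp measurable_swap).add hc.hFmeas

end

/-- Lemma `measurability_flow`.  There exists a jointly measurable version
of a backward Cauchy–Peano flow for the ODE `ẏ_u = A_u y_u + F(u, y_u)`:
`θ_{t,s}(z) = z − ∫_t^s [A_u θ_{u,s}(z) + F(u, θ_{u,s}(z))] du` for all `0 ≤ t ≤ s ≤ T`. -/
theorem stmt1 {n : ℕ} [NeZero n] {d : Fin n → ℕ} {α T K : ℝ}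
    {A : ℝ → E n d →L[ℝ] E n d} {F : ℝ → E n d → E n d} {β : Fin n → ℝ}
    (hc : ChainHyp n d α T K A F β) :
    ∃ θ : ℝ → ℝ → E n d → E n d,
      Measurable (fun p : ℝ × ℝ × E n d => θ p.1 p.2.1 p.2.2) ∧
      ∀ t s : ℝ, 0 ≤ t → t ≤ s → s ≤ T → ∀ z : E n d,
        θ t s z = z - ∫ u in t..s, (A u (θ u s z) + F u (θ u s z)) := by
  obtain ⟨C, hC, hgC⟩ := hc.exists_growth
  -- Parameter `p = (s, z)`: with the time change `r = s - u` the backward equation with terminal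
  -- value `z` at time `s` becomes a forward equation started from `z` at time `0`.
  let g : ℝ × E n d → ℝ → E n d → E n d := fun p r x => -(A (p.1 - r) x + F (p.1 - r) x)
  have hpair : Measurable fun a : (ℝ × E n d) × ℝ × E n d => (a.1.1 - a.2.1, a.2.2) := by
    fun_prop
  have hg : Measurable fun a : (ℝ × E n d) × ℝ × E n d => g a.1 a.2.1 a.2.2 :=
    (hc.measurable_drift.comp hpair).neg
  obtain ⟨v, hv, hsol⟩ := exists_measurable_solution (g := g) (z := Prod.snd) (C := C) hc.hT
    hg measurable_snd hC (fun p q x => by simpa only [g, norm_neg] using hgC (p.1 - q) x)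
    (fun p q => ((A (p.1 - q)).continuous.add (hc.continuous_F (p.1 - q))).neg)
  refine ⟨fun t s z => v (s, z) (s - t), ?_, fun t s h0t hts hsT z => ?_⟩
  · exact hv.comp (measurable_snd.prodMk
      ((measurable_fst.comp measurable_snd).sub measurable_fst))
  · have h := hsol (s, z) (s - t) ⟨by linarith, by linarith⟩
    simp only
    rw [h, ← intervalIntegral.integral_of_le (by linarith)]
    simp only [g]
    rw [intervalIntegral.integral_neg, ← sub_eq_add_neg]
    congr 1
    have hsub := intervalIntegral.integral_comp_sub_left (a := 0) (b := s - t)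
      (fun u => A u (v (s, z) (s - u)) + F u (v (s, z) (s - u))) s
    simpa using hsub

end
end

section
/- Let θ and θ̌ be two flows for (A,F). Then there exist positive constants C = C(T) and C' = C'(T) such that for all 0 ≤ t < s ≤ T and all x, y ∈ ℝ^N: C^{-1} |𝕋_{s−t}^{-1}(θ̌_{s,t}(x) − y)| − C' ≤ |𝕋_{s−t}^{-1}(x − θ_{t,s}(y))| ≤ C ( |𝕋_{s−t}^{-1}(θ̌_{s,t}(x) − y)| + 1 ), where θ̌_{s,t}(x) is the forward flow started from x at time t and θ_{t,s}(y) is the backward flow with terminal value y at time s. -/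
/-!
Two flow lines `X_u = θ'_{u,t}(x)` and `Y_u = θ_{u,s}(y)` solve the same equation, and the two
quantities to compare are the rescaled differences `𝕋_h⁻¹ (X - Y)`, `h = s - t`, at the two ends of
the time interval `[t, s]`. The estimate behind the theorem is `scaled_field_le`: after rescaling,
the increment of the vector field is at most `(C / h) (1 + |𝕋_h⁻¹ (X - Y)|)`. For the linear part
this is the sub-diagonal block structure of `A`, component `j` entering component `i` only if
`j ≥ i - 1`; for `F` it is, with components counted from `0`, the inequality
`β_j (1/α + j) ≥ 1/α + i - 1` for `j ≥ i ≥ 1`, which is what the lower bound on the Hölder exponents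
provides (for component `0` it suffices that `1/α ≤ 1`), together with `r ^ β ≤ 1 + r`.
Grönwall's inequality over a time of length `h` then costs a factor
`exp (h · C / h) = exp C`, in either time direction, which gives both inequalities.

The flow equation is an identity of Bochner integrals, so the integrability of the velocity along a
flow line has to be proved (`flow_intervalIntegrable`) before increments can be manipulated.
-/

open MeasureTheory Real Set

noncomputable section

/-! ### Integral Grönwall inequalities -/

/-- Grönwall's inequality in integral form. -/
lemma gronwall_integral {v : ℝ → ℝ} (hv : Continuous v) {a b c k : ℝ} (hab : a ≤ b) (hk : 0 ≤ k)
    (h : ∀ u ∈ Icc a b, v u ≤ c + k * ∫ r in a..u, v r) :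
    v b ≤ c * Real.exp (k * (b - a)) := by
  set w : ℝ → ℝ := fun u => c + k * ∫ r in a..u, v r with hw
  have hd : ∀ u, HasDerivAt w (k * v u) u := fun u =>
    ((hv.integral_hasStrictDerivAt a u).hasDerivAt.const_mul k).const_add c
  have hle := le_gronwallBound_of_liminf_deriv_right_le (f := w) (f' := fun u => k * v u)
    (δ := c) (K := k) (ε := 0) (a := a) (b := b)
    (fun u _ => (hd u).continuousAt.continuousWithinAt)
    (fun u _ r hr => (hd u).hasDerivWithinAt.liminf_right_slope_le hr)
    (by simp [hw])
    (fun u hu => by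
      simpa using mul_le_mul_of_nonneg_left (h u (Ico_subset_Icc_self hu)) hk)
    b (right_mem_Icc.2 hab)
  rw [gronwallBound_ε0] at hle
  exact (h b (right_mem_Icc.2 hab)).trans hle

/-- Grönwall for an integral curve with affinely bounded velocity, forward in time. -/
lemma affine_gronwall_forward {V : Type*} [NormedAddCommGroup V] [NormedSpace ℝ V]
    {f g : ℝ → V} {a b k : ℝ} (hab : a ≤ b) (hk : 0 ≤ k)
    (hg : IntervalIntegrable g volume a b)
    (hf : ∀ u ∈ Icc a b, f u = f a + ∫ r in a..u, g r)
    (hb : ∀ u ∈ Icc a b, ‖g u‖ ≤ k * (‖f u‖ + 1)) :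
    ‖f b‖ + 1 ≤ (‖f a‖ + 1) * Real.exp (k * (b - a)) := by
  have hcont : ContinuousOn f (Icc a b) := by
    have h1 := intervalIntegral.continuousOn_primitive_interval' hg left_mem_uIcc
    rw [uIcc_of_le hab] at h1
    exact (continuousOn_const.add h1).congr hf
  -- outside `[a, b]` the norm is frozen, which makes the comparison function continuous
  set v : ℝ → ℝ := IccExtend hab (fun u : Icc a b => ‖f u‖ + 1) with hv
  have hvc : Continuous v := by
    apply Continuous.Icc_extend'
    exact (hcont.domRestrict.norm).add continuous_const
  have hve : ∀ u ∈ Icc a b, v u = ‖f u‖ + 1 := fun u hu => by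
    rw [hv, IccExtend_of_mem hab _ hu]
  have key := gronwall_integral hvc (c := ‖f a‖ + 1) hab hk (fun u hu => by
    rw [hve u hu, hf u hu, ← intervalIntegral.integral_const_mul]
    have hn : ‖∫ r in a..u, g r‖ ≤ ∫ r in a..u, k * v r := by
      apply intervalIntegral.norm_integral_le_of_norm_le hu.1
      · refine Filter.Eventually.of_forall fun r hr => ?_
        have hr' : r ∈ Icc a b := ⟨hr.1.le, hr.2.trans hu.2⟩
        rw [hve r hr']
        exact hb r hr'
      · exact (hvc.const_mul k).intervalIntegrable _ _
    linarith [norm_add_le (f a) (∫ r in a..u, g r)])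
  rwa [hve b (right_mem_Icc.2 hab)] at key

/-- Grönwall for an integral curve with affinely bounded velocity, in either time direction. -/
lemma affine_gronwall {V : Type*} [NormedAddCommGroup V] [NormedSpace ℝ V]
    {f g : ℝ → V} {a b k : ℝ} (hk : 0 ≤ k)
    (hg : IntervalIntegrable g volume a b)
    (hf : ∀ u ∈ uIcc a b, f u = f a + ∫ r in a..u, g r)
    (hb : ∀ u ∈ uIcc a b, ‖g u‖ ≤ k * (‖f u‖ + 1)) :
    ‖f b‖ + 1 ≤ (‖f a‖ + 1) * Real.exp (k * |b - a|) := by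
  rcases le_total a b with hab | hab
  · rw [uIcc_of_le hab] at hf hb
    rw [abs_of_nonneg (sub_nonneg.2 hab)]
    exact affine_gronwall_forward hab hk hg hf hb
  · rw [uIcc_of_ge hab] at hf hb
    rw [abs_of_nonpos (sub_nonpos.2 hab)]
    -- time reversal `u ↦ -u`
    have := affine_gronwall_forward (f := fun u => f (-u)) (g := fun u => - g (-u))
      (a := -a) (b := -b) (k := k) (by linarith) hk
      (show IntervalIntegrable (fun u => g (-u)) volume (-a) (-b) by
        simpa using hg.comp_sub_left 0).neg
      (fun u hu => by
        have hu' : -u ∈ Icc b a := ⟨by linarith [hu.2], by linarith [hu.1]⟩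
        rw [hf _ hu', intervalIntegral.integral_neg, intervalIntegral.integral_comp_neg, neg_neg,
          ← intervalIntegral.integral_symm])
      (fun u hu => by
        have hu' : -u ∈ Icc b a := ⟨by linarith [hu.2], by linarith [hu.1]⟩
        rw [norm_neg]
        exact hb _ hu')
    simp only [neg_neg] at this
    convert this using 4
    ring

/-! ### The rescaled vector field -/

/-- Telescoping over the coordinates. -/
lemma norm_sub_le_sum_coord {ι V : Type*} [Fintype ι] [DecidableEq ι] {X : ι → Type*}
    [∀ i, NormedAddCommGroup (X i)] [SeminormedAddCommGroup V]
    (f : (∀ i, X i) → V) (g : ι → ℝ → ℝ)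
    (h : ∀ j x x', (∀ k, k ≠ j → x k = x' k) → ‖f x - f x'‖ ≤ g j ‖x j - x' j‖)
    (x y : ∀ i, X i) : ‖f x - f y‖ ≤ ∑ j, g j ‖x j - y j‖ := by
  have main : ∀ s : Finset ι, ‖f (s.piecewise x y) - f y‖ ≤ ∑ j ∈ s, g j ‖x j - y j‖ := by
    intro s
    induction s using Finset.induction_on with
    | empty => simp
    | insert j s hj ih =>
      rw [Finset.sum_insert hj]
      have h1 := h j ((insert j s).piecewise x y) (s.piecewise x y) (fun k hk => by
        simp [Finset.piecewise, hk])
      have e1 : (insert j s).piecewise x y j = x j := by simp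
      have e2 : s.piecewise x y j = y j := by simp [hj]
      rw [e1, e2] at h1
      calc _ ≤ _ := norm_sub_le_norm_sub_add_norm_sub _ (f (s.piecewise x y)) _
        _ ≤ _ := add_le_add h1 ih
  simpa using main Finset.univ

/-- The exponent count behind the rescaled estimate: `β (1/α + j) ≥ 1/α + i - 1` says that a
`β`-Hölder dependence of component `i` on component `j` costs at most `h⁻¹` after rescaling. -/
lemma scaled_rpow_le {n : ℕ} {α h M β r W : ℝ} (i j : Fin n) (hα : 1 < α) (hM : 1 ≤ M)
    (hh : 0 < h) (hhM : h ≤ M) (hβ0 : 0 ≤ β) (hβ1 : β ≤ 1) (hr : 0 ≤ r) (hW : 0 ≤ W)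
    (hrW : r ≤ h ^ (1 / α + ((j : ℕ) : ℝ)) * W)
    (hexp : 1 / α + ((i : ℕ) : ℝ) - 1 ≤ β * (1 / α + ((j : ℕ) : ℝ))) :
    (h ^ (1 / α + ((i : ℕ) : ℝ)))⁻¹ * r ^ β ≤ M ^ ((n : ℝ) + 1) / h * (W + 1) := by
  have hα0 : 0 < 1 / α := by positivity
  have hi : (0 : ℝ) ≤ ((i : ℕ) : ℝ) := Nat.cast_nonneg _
  have hj : ((j : ℕ) : ℝ) ≤ n := by exact_mod_cast j.2.le
  have hj0 : (0 : ℝ) ≤ ((j : ℕ) : ℝ) := Nat.cast_nonneg _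
  set p := 1 / α + ((i : ℕ) : ℝ) with hp
  set q := 1 / α + ((j : ℕ) : ℝ) with hq
  have hWβ : W ^ β ≤ W + 1 := by
    rcases le_total W 1 with h1 | h1
    · linarith [Real.rpow_le_one hW h1 hβ0]
    · have := Real.rpow_le_rpow_of_exponent_le h1 hβ1
      rw [Real.rpow_one] at this
      linarith
  have h1 : r ^ β ≤ h ^ (q * β) * (W + 1) := by
    calc r ^ β ≤ (h ^ q * W) ^ β := Real.rpow_le_rpow hr hrW hβ0
      _ = h ^ (q * β) * W ^ β := by
        rw [Real.mul_rpow (by positivity) hW, ← Real.rpow_mul hh.le]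
      _ ≤ _ := by gcongr
  have h2 : (h ^ p)⁻¹ * h ^ (q * β) = h ^ (q * β - p + 1) / h := by
    rw [Real.rpow_add hh (q * β - p) 1, Real.rpow_sub hh, Real.rpow_one]
    field_simp
  have h3 : h ^ (q * β - p + 1) ≤ M ^ ((n : ℝ) + 1) := by
    have hqβ : q * β ≤ q := mul_le_of_le_one_right (by positivity) hβ1
    calc h ^ (q * β - p + 1) ≤ M ^ (q * β - p + 1) :=
          Real.rpow_le_rpow hh.le hhM (by linarith)
      _ ≤ _ := Real.rpow_le_rpow_of_exponent_le hM (by linarith)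
  calc (h ^ p)⁻¹ * r ^ β ≤ (h ^ p)⁻¹ * (h ^ (q * β) * (W + 1)) := by gcongr
    _ = h ^ (q * β - p + 1) / h * (W + 1) := by rw [← mul_assoc, h2]
    _ ≤ _ := by gcongr

/-- `Tinv α h` as a continuous linear map. -/
def TinvL (n : ℕ) (d : Fin n → ℕ) (α h : ℝ) : E n d →L[ℝ] E n d :=
  ContinuousLinearMap.pi fun i =>
    (h ^ ((1 : ℝ) / α + ((i : ℕ) : ℝ)))⁻¹ • ContinuousLinearMap.proj i

lemma TinvL_apply {n : ℕ} {d : Fin n → ℕ} (α h : ℝ) (x : E n d) :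
    TinvL n d α h x = Tinv α h x := rfl

lemma norm_coord_le_Tinv {n : ℕ} {d : Fin n → ℕ} {α h : ℝ} (hh : 0 < h) (z : E n d) (j : Fin n) :
    ‖z j‖ ≤ h ^ (1 / α + ((j : ℕ) : ℝ)) * ‖Tinv α h z‖ := by
  have h1 := norm_le_pi_norm (Tinv α h z) j
  have hpos : 0 < h ^ (1 / α + ((j : ℕ) : ℝ)) := by positivity
  rw [Tinv, norm_smul, Real.norm_eq_abs, abs_of_pos (inv_pos.2 hpos)] at h1
  rwa [inv_mul_le_iff₀ hpos] at h1

section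

variable {n : ℕ} [NeZero n] {d : Fin n → ℕ} {α T K : ℝ}
  {A : ℝ → E n d →L[ℝ] E n d} {F : ℝ → E n d → E n d} {β : Fin n → ℝ}

/-- Componentwise modulus of continuity of the drift `F`, in a form where the exponent
condition of `scaled_rpow_le` is available whenever the dependence is non-trivial. -/
lemma drift_coord_le (hc : ChainHyp n d α T K A F β) :
    ∃ CH : ℝ, 0 < CH ∧ ∀ i : Fin n, ∃ e : Fin n → ℝ, (∀ j, 0 ≤ e j ∧ e j ≤ 1) ∧
      ∃ S : Finset (Fin n),
      (∀ j ∈ S, 1 / α + ((i : ℕ) : ℝ) - 1 ≤ e j * (1 / α + ((j : ℕ) : ℝ))) ∧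
      ∀ t x y, ‖F t x i - F t y i‖ ≤ ∑ j ∈ S, CH * ‖x j - y j‖ ^ e j := by
  obtain ⟨CH, hCH, h0, h1⟩ := hc.hHolder
  have hα0 : 0 < α := by linarith [hc.hα₁]
  have hαi : 1 / α ≤ 1 := by rw [div_le_one hα0]; exact hc.hα₁.le
  have hαp : 0 < 1 / α := by positivity
  refine ⟨CH, hCH, fun i => ?_⟩
  by_cases hi : i = 0
  · subst hi
    refine ⟨fun _ => β 0, fun _ => ⟨hc.hβ0.1.le, hc.hβ0.2⟩, Finset.univ, fun j _ => ?_,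
      fun t x y => ?_⟩
    · have : 0 ≤ β 0 * (1 / α + ((j : ℕ) : ℝ)) := mul_nonneg hc.hβ0.1.le (by positivity)
      simp only [Fin.val_zero, Nat.cast_zero] at this ⊢
      linarith
    · exact norm_sub_le_sum_coord (fun x => F t x 0) (fun _ r => CH * r ^ β 0)
        (fun j x x' hx => h0 j t x x' hx) x y
  · have hi1 : 1 ≤ (i : ℕ) := by
      rw [Nat.one_le_iff_ne_zero]
      exact fun h => hi (Fin.ext (by simpa using h))
    have hβj : ∀ j : Fin n, i ≤ j → (1 + α * (((j : ℕ) : ℝ) - 1)) / (1 + α * ((j : ℕ) : ℝ)) < β j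
        ∧ β j ≤ 1 := fun j hj => hc.hβ j (hi1.trans hj)
    refine ⟨fun j => if i ≤ j then β j else 0, fun j => ?_, Finset.univ.filter (i ≤ ·),
      fun j hj => ?_, fun t x y => ?_⟩
    · dsimp only
      split_ifs with hj
      · refine ⟨le_trans ?_ (hβj j hj).1.le, (hβj j hj).2⟩
        have : (1 : ℝ) ≤ ((j : ℕ) : ℝ) := by exact_mod_cast hi1.trans hj
        have : 0 ≤ α * (((j : ℕ) : ℝ) - 1) := mul_nonneg hα0.le (by linarith)
        positivity
      · simp
    · have hj' : i ≤ j := (Finset.mem_filter.1 hj).2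
      have hij : ((i : ℕ) : ℝ) ≤ ((j : ℕ) : ℝ) := by exact_mod_cast hj'
      simp only [hj', if_true]
      have hpos : 0 < 1 + α * ((j : ℕ) : ℝ) := by positivity
      have h2 := (div_lt_iff₀ hpos).1 (hβj j hj').1
      have h3 : α * (1 / α) = 1 := by field_simp
      have h4 : α * (1 / α + ((j : ℕ) : ℝ) - 1) ≤ α * (β j * (1 / α + ((j : ℕ) : ℝ))) := by
        have e1 : α * (1 / α + ((j : ℕ) : ℝ) - 1) = 1 + α * (((j : ℕ) : ℝ) - 1) := by
          linear_combination h3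
        have e2 : α * (β j * (1 / α + ((j : ℕ) : ℝ))) = β j * (1 + α * ((j : ℕ) : ℝ)) := by
          linear_combination β j * h3
        rw [e1, e2]
        exact h2.le
      linarith [le_of_mul_le_mul_left h4 hα0]
    · have := norm_sub_le_sum_coord (fun x => F t x i)
        (fun j r => if i ≤ j then CH * r ^ β j else 0)
        (fun j x x' hx => by
          split_ifs with hj
          · exact h1 i j hi1 hj t x x' hx
          · rw [hc.hFdep i t x x' (fun k hk => hx k (by rintro rfl; exact hj hk))]
            simp) x y
      refine this.trans (le_of_eq ?_)
      rw [Finset.sum_filter]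
      refine Finset.sum_congr rfl fun j _ => ?_
      by_cases hj : i ≤ j <;> simp [hj]

/-- The rescaled vector field grows at most affinely with rate `h⁻¹`. -/
lemma scaled_field_le (hc : ChainHyp n d α T K A F β) {M : ℝ} (hM : 1 ≤ M) :
    ∃ C : ℝ, 0 < C ∧ ∀ h, 0 < h → h ≤ M → ∀ t x y,
      ‖Tinv α h ((A t x + F t x) - (A t y + F t y))‖ ≤ C / h * (‖Tinv α h (x - y)‖ + 1) := by
  obtain ⟨CH, hCH, hF⟩ := drift_coord_le hc
  obtain ⟨CA, hCA⟩ := hc.hAbdd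
  have hCA0 : 0 ≤ CA := (norm_nonneg _).trans (hCA 0)
  have hn : 0 < (n : ℝ) := by exact_mod_cast Nat.pos_of_ne_zero (NeZero.ne n)
  have hα0 : 0 < α := by linarith [hc.hα₁]
  refine ⟨n * (CA + CH) * M ^ ((n : ℝ) + 1), by positivity, fun h hh hhM t x y => ?_⟩
  set W := ‖Tinv α h (x - y)‖ with hWdef
  have hW : 0 ≤ W := norm_nonneg _
  set B := M ^ ((n : ℝ) + 1) / h * (W + 1) with hB
  have hB0 : 0 ≤ B := by positivity
  have hgoal : n * (CA + CH) * M ^ ((n : ℝ) + 1) / h * (W + 1) = n * (CA * B) + n * (CH * B) := by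
    rw [hB]; ring
  rw [hgoal]
  refine (pi_norm_le_iff_of_nonneg (by positivity)).2 fun i => ?_
  have hpos : 0 < h ^ (1 / α + ((i : ℕ) : ℝ)) := by positivity
  rw [Tinv, norm_smul, Real.norm_eq_abs, abs_of_pos (inv_pos.2 hpos)]
  set c := (h ^ (1 / α + ((i : ℕ) : ℝ)))⁻¹ with hcdef
  have hc0 : 0 ≤ c := (inv_pos.2 hpos).le
  set z := x - y with hz
  have hsplit : ((A t x + F t x) - (A t y + F t y)) i = A t z i + (F t x i - F t y i) := by
    rw [hz, map_sub]
    simp only [Pi.sub_apply, Pi.add_apply]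
    abel
  have hlin : c * ‖A t z i‖ ≤ n * (CA * B) := by
    have hsum : A t z i = ∑ j, A t (Pi.single j (z j)) i := by
      conv_lhs => rw [← Finset.univ_sum_single z, map_sum, Finset.sum_apply]
    rw [hsum]
    calc c * ‖∑ j, A t (Pi.single j (z j)) i‖ ≤ c * ∑ j, ‖A t (Pi.single j (z j)) i‖ := by
          gcongr; exact norm_sum_le _ _
      _ = ∑ j, c * ‖A t (Pi.single j (z j)) i‖ := Finset.mul_sum _ _ _
      _ ≤ ∑ _j : Fin n, CA * B := Finset.sum_le_sum fun j _ => ?_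
      _ = n * (CA * B) := by simp
    by_cases hij : (j : ℕ) + 1 < (i : ℕ)
    · rw [hc.hAblock t i j _ hij, norm_zero, mul_zero]
      positivity
    · have hij' : ((i : ℕ) : ℝ) ≤ ((j : ℕ) : ℝ) + 1 := by exact_mod_cast not_lt.1 hij
      have h1 : ‖A t (Pi.single j (z j)) i‖ ≤ CA * ‖z j‖ :=
        calc _ ≤ ‖A t (Pi.single j (z j))‖ := norm_le_pi_norm _ i
          _ ≤ ‖A t‖ * ‖(Pi.single j (z j) : E n d)‖ := (A t).le_opNorm _
          _ ≤ CA * ‖z j‖ := by rw [Pi.norm_single]; gcongr; exact hCA t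
      have h2 := scaled_rpow_le (β := 1) i j hc.hα₁ hM hh hhM zero_le_one le_rfl
        (norm_nonneg (z j)) hW (norm_coord_le_Tinv hh z j) (by linarith)
      rw [Real.rpow_one] at h2
      calc _ ≤ c * (CA * ‖z j‖) := by gcongr
        _ = CA * (c * ‖z j‖) := by ring
        _ ≤ CA * B := by gcongr
  have hnl : c * ‖F t x i - F t y i‖ ≤ n * (CH * B) := by
    obtain ⟨e, he, S, hS, hFi⟩ := hF i
    calc c * ‖F t x i - F t y i‖ ≤ c * ∑ j ∈ S, CH * ‖x j - y j‖ ^ e j := by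
          gcongr; exact hFi t x y
      _ = ∑ j ∈ S, CH * (c * ‖z j‖ ^ e j) := by
          rw [Finset.mul_sum]
          refine Finset.sum_congr rfl fun j _ => ?_
          rw [hz, Pi.sub_apply]; ring
      _ ≤ ∑ _j ∈ S, CH * B := Finset.sum_le_sum fun j hj => by
          gcongr
          exact scaled_rpow_le i j hc.hα₁ hM hh hhM (he j).1 (he j).2
            (norm_nonneg (z j)) hW (norm_coord_le_Tinv hh z j) (hS j hj)
      _ = (S.card : ℝ) * (CH * B) := by simp
      _ ≤ n * (CH * B) := by
          gcongr
          simpa using S.card_le_univ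
  calc _ ≤ c * (‖A t z i‖ + ‖F t x i - F t y i‖) := by
        rw [hsplit]; gcongr; exact norm_add_le _ _
    _ ≤ _ := by rw [mul_add]; exact add_le_add hlin hnl

/-- Linear growth of the vector field: the case `h = 1`, `y = 0` of `scaled_field_le`. -/
lemma field_growth (hc : ChainHyp n d α T K A F β) :
    ∃ C : ℝ, 0 < C ∧ ∀ t x, ‖A t x + F t x‖ ≤ C * (‖x‖ + 1) := by
  obtain ⟨C, hC, h⟩ := scaled_field_le hc le_rfl
  have hK : 0 < K := by linarith [hc.hK]
  have hT1 : ∀ x : E n d, Tinv α 1 x = x := fun x => by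
    funext i
    simp [Tinv]
  refine ⟨C + K, by positivity, fun t x => ?_⟩
  have h1 := h 1 one_pos le_rfl t x 0
  rw [hT1, hT1, map_zero, zero_add, sub_zero, div_one] at h1
  have h2 : ‖F t 0‖ ≤ K := (pi_norm_le_iff_of_nonneg hK.le).2 (hc.hF0 t)
  have h3 : ‖A t x + F t x‖ ≤ ‖A t x + F t x - F t 0‖ + ‖F t 0‖ := norm_le_norm_sub_add _ _
  nlinarith [norm_nonneg x]

/-! ### Flow lines -/

/-- The velocity along a flow line is integrable. Since the Bochner integral of a
non-integrable function is `0`, the flow equation gives `θ t s z = z` wherever integrability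
would fail, so the Grönwall bound on the flow line holds in every case. -/
lemma flow_intervalIntegrable (hc : ChainHyp n d α T K A F β) {θ : ℝ → ℝ → E n d → E n d}
    (hθ : IsFlow T A F θ) {s : ℝ} (hs : s ∈ Icc 0 T) (z : E n d) {a b : ℝ}
    (ha : a ∈ Icc 0 T) (hb : b ∈ Icc 0 T) :
    IntervalIntegrable (fun u => A u (θ u s z) + F u (θ u s z)) volume a b := by
  obtain ⟨C, hC, hgrow⟩ := field_growth hc
  set g : ℝ → E n d := fun u => A u (θ u s z) + F u (θ u s z) with hg
  have hθu : Measurable fun u => θ u s z :=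
    hθ.1.comp (measurable_id.prodMk (measurable_const (a := (s, z))))
  have hgm : Measurable g := by
    refine Measurable.add ?_ (hc.hFmeas.comp (measurable_id.prodMk hθu))
    have hA : Measurable (Function.uncurry fun (x : E n d) (u : ℝ) => A u x) :=
      measurable_uncurry_of_continuous_of_measurable (fun u => (A u).continuous) hc.hAmeas
    exact hA.comp (hθu.prodMk measurable_id)
  have hbd : ∀ t ∈ Icc 0 T, ‖θ t s z‖ + 1 ≤ (‖z‖ + 1) * Real.exp (C * T) := by
    intro t ht
    have hsub : uIcc s t ⊆ Icc 0 T := uIcc_subset_Icc hs ht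
    have hss : θ s s z = z := by simpa using hθ.2 s s hs hs z
    by_cases hint : IntervalIntegrable g volume s t
    · have := affine_gronwall (f := fun u => θ u s z) hC.le hint
        (fun u hu => by
          rw [hss, hθ.2 u s (hsub hu) hs z, intervalIntegral.integral_symm, sub_neg_eq_add])
        (fun u _ => hgrow u _)
      rw [hss] at this
      refine this.trans ?_
      have : |t - s| ≤ T := abs_le.2 ⟨by linarith [ht.1, hs.2], by linarith [ht.2, hs.1]⟩
      gcongr
    · have : θ t s z = z := by
        rw [hθ.2 t s ht hs z, intervalIntegral.integral_undef fun h => hint h.symm, sub_zero]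
      rw [this]
      have hT : 0 ≤ C * T := mul_nonneg hC.le hc.hT.le
      exact le_mul_of_one_le_right (by positivity) (Real.one_le_exp hT)
  rw [intervalIntegrable_iff]
  refine Measure.integrableOn_of_bounded (M := C * ((‖z‖ + 1) * Real.exp (C * T)))
    (by simp [uIoc]) hgm.aestronglyMeasurable ?_
  refine (ae_restrict_iff' measurableSet_uIoc).2 (Filter.Eventually.of_forall fun u hu => ?_)
  have hu' : u ∈ Icc 0 T := uIcc_subset_Icc ha hb (uIoc_subset_uIcc hu)
  exact (hgrow u _).trans (by gcongr; exact hbd u hu')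

/-- Increments of a flow line between arbitrary times. -/
lemma flow_increment (hc : ChainHyp n d α T K A F β) {θ : ℝ → ℝ → E n d → E n d}
    (hθ : IsFlow T A F θ) {s : ℝ} (hs : s ∈ Icc 0 T) (z : E n d) {a b : ℝ}
    (ha : a ∈ Icc 0 T) (hb : b ∈ Icc 0 T) :
    θ b s z = θ a s z + ∫ u in a..b, (A u (θ u s z) + F u (θ u s z)) := by
  rw [hθ.2 b s hb hs z, hθ.2 a s ha hs z, ← intervalIntegral.integral_add_adjacent_intervals
    (flow_intervalIntegrable hc hθ hs z ha hb) (flow_intervalIntegrable hc hθ hs z hb hs)]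
  abel

/-- Two flow lines, with arbitrary base points, separate in the scaled norm at a controlled
rate over a time interval whose length matches the scale. -/
lemma flow_separation (hc : ChainHyp n d α T K A F β) {θ θ' : ℝ → ℝ → E n d → E n d}
    (hθ : IsFlow T A F θ) (hθ' : IsFlow T A F θ') :
    ∃ D : ℝ, 0 < D ∧ ∀ a ∈ Icc 0 T, ∀ b ∈ Icc 0 T, a ≠ b → ∀ p ∈ Icc 0 T, ∀ q ∈ Icc 0 T,
      ∀ x y : E n d, ‖Tinv α |b - a| (θ' b p x - θ b q y)‖ + 1 ≤
        (‖Tinv α |b - a| (θ' a p x - θ a q y)‖ + 1) * D := by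
  obtain ⟨C, hC, hsc⟩ := scaled_field_le hc (le_max_right T 1)
  refine ⟨Real.exp C, Real.exp_pos _, fun a ha b hb hab p hp q hq x y => ?_⟩
  set h := |b - a| with hh
  have hpos : 0 < h := abs_pos.2 (sub_ne_zero.2 hab.symm)
  have hle : h ≤ max T 1 :=
    (abs_le.2 ⟨by linarith [ha.2, hb.1], by linarith [hb.2, ha.1]⟩ : |b - a| ≤ T).trans
      (le_max_left _ _)
  have hsub : uIcc a b ⊆ Icc 0 T := uIcc_subset_Icc ha hb
  have hint : ∀ u ∈ Icc 0 T, IntervalIntegrable (fun u => (A u (θ' u p x) + F u (θ' u p x)) -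
      (A u (θ u q y) + F u (θ u q y))) volume a u := fun u hu =>
    (flow_intervalIntegrable hc hθ' hp x ha hu).sub (flow_intervalIntegrable hc hθ hq y ha hu)
  have key := affine_gronwall (f := fun u => TinvL n d α h (θ' u p x - θ u q y))
    (g := fun u => TinvL n d α h ((A u (θ' u p x) + F u (θ' u p x)) -
      (A u (θ u q y) + F u (θ u q y)))) (a := a) (b := b) (k := C / h) (by positivity)
    (by
      have := hint b hb
      rw [intervalIntegrable_iff] at this ⊢
      exact (TinvL n d α h).integrable_comp this)
    (fun u hu => by
      rw [ContinuousLinearMap.intervalIntegral_comp_comm _ (hint u (hsub hu)), ← map_add,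
        intervalIntegral.integral_sub (flow_intervalIntegrable hc hθ' hp x ha (hsub hu))
          (flow_intervalIntegrable hc hθ hq y ha (hsub hu)),
        flow_increment hc hθ' hp x ha (hsub hu), flow_increment hc hθ hq y ha (hsub hu)]
      congr 1
      abel)
    (fun u _ => hsc h hpos hle u _ _)
  rwa [← hh, div_mul_cancel₀ _ hpos.ne'] at key

end

/-- Lemma `bilip_control_flow`, approximate Lipschitz property of the flows.
Let `θ` and `θ̌` be two flows for `(A,F)`.  Then there exist positive constants `C, C'`
(depending on `T`) such that for all `0 ≤ t < s ≤ T` and all `x, y`: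
`C⁻¹ |𝕋_{s−t}⁻¹(θ̌_{s,t}(x) − y)| − C' ≤ |𝕋_{s−t}⁻¹(x − θ_{t,s}(y))|
  ≤ C (|𝕋_{s−t}⁻¹(θ̌_{s,t}(x) − y)| + 1)`. -/
theorem stmt2 {n : ℕ} [NeZero n] {d : Fin n → ℕ} {α T K : ℝ}
    {A : ℝ → E n d →L[ℝ] E n d} {F : ℝ → E n d → E n d} {β : Fin n → ℝ}
    (hc : ChainHyp n d α T K A F β)
    (θ θ' : ℝ → ℝ → E n d → E n d) (hθ : IsFlow T A F θ) (hθ' : IsFlow T A F θ') :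
    ∃ C : ℝ, 0 < C ∧ ∃ C' : ℝ, 0 < C' ∧
      ∀ t s : ℝ, 0 ≤ t → t < s → s ≤ T → ∀ x y : E n d,
        C⁻¹ * ‖Tinv α (s - t) (θ' s t x - y)‖ - C' ≤ ‖Tinv α (s - t) (x - θ t s y)‖ ∧
        ‖Tinv α (s - t) (x - θ t s y)‖ ≤ C * (‖Tinv α (s - t) (θ' s t x - y)‖ + 1) := by
  obtain ⟨D, hD, h⟩ := flow_separation hc hθ hθ'
  refine ⟨D, hD, 1, one_pos, fun t s ht hts hs x y => ?_⟩
  have htI : t ∈ Icc 0 T := ⟨ht, hts.le.trans hs⟩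
  have hsI : s ∈ Icc 0 T := ⟨ht.trans hts.le, hs⟩
  have hx : θ' t t x = x := by simpa using hθ'.2 t t htI htI x
  have hy : θ s s y = y := by simpa using hθ.2 s s hsI hsI y
  have h1 := h t htI s hsI hts.ne t htI s hsI x y
  have h2 := h s hsI t htI hts.ne' t htI s hsI x y
  rw [abs_of_pos (sub_pos.2 hts), hx, hy] at h1
  rw [abs_sub_comm, abs_of_pos (sub_pos.2 hts), hx, hy] at h2
  constructor
  · have h3 : D⁻¹ * ‖Tinv α (s - t) (θ' s t x - y)‖ ≤ ‖Tinv α (s - t) (x - θ t s y)‖ + 1 := by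
      rw [inv_mul_le_iff₀ hD]
      linarith
    linarith
  · linarith

end
end
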